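/- Let F = C((t)) and O = C[[t]]. For a dominant weight (λ, θ) with λ = (λ_1 ≤ ... ≤ λ_M) and θ = (θ_1 ≤ ... ≤ θ_{M+1}) integer sequences, let L_{(λ,θ)} ∈ GL_{M+1}(F) be the matrix with diagonal entries t^{λ_1+θ_1}, ..., t^{λ_M+θ_M}, t^{θ_{M+1}} and last row (t^{θ_1}, ..., t^{θ_M}, t^{θ_{M+1}}) (all other entries zero). If (λ, θ) ≠ (λ', θ') are two such dominant weights, then L_{(λ',θ')}^{-1} · GL_M(O) · L_{(λ,θ)} ∩ GL_{M+1}(O) = ∅, where GL_M(O) is embedded in GL_{M+1} as the upper-left block. -/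

import Mathlib

/- Common setup: `F = ℂ((t))` the field of formal Laurent series, `O = ℂ[[t]]` its ring of
integers (elements with no negative coefficients), `tpow k = t^k`.  `InGLO A` says that the
square matrix `A` lies in `GL(O)`, i.e. both `A` and an inverse of `A` have entries in `O`. -/

noncomputable section

abbrev F : Type := LaurentSeries ℂ

/-- `t^k` for `k : ℤ`, where `t` is the uniformizer of `ℂ((t))`. -/
noncomputable def tpow (k : ℤ) : F := (HahnSeries.single (1 : ℤ) (1 : ℂ) : F) ^ k

/-- The ring of integers `O = ℂ[[t]] ⊆ ℂ((t))`. -/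
def Oint : Set F := {f : F | ∀ m : ℤ, m < 0 → f.coeff m = 0}

/-- `A ∈ GL_n(O)`. -/
def InGLO {n : ℕ} (A : Matrix (Fin n) (Fin n) F) : Prop :=
  ∃ B : Matrix (Fin n) (Fin n) F,
    (∀ i j, A i j ∈ Oint) ∧ (∀ i j, B i j ∈ Oint) ∧ A * B = 1 ∧ B * A = 1

/-- Block-diagonal embedding of an `M×M` matrix into the top-left corner of an `n×n`
matrix, with `1`'s on the rest of the diagonal. -/
noncomputable def embTop (M n : ℕ) (g : Matrix (Fin M) (Fin M) F) :
    Matrix (Fin n) (Fin n) F := fun i j =>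
  if hi : (i : ℕ) < M then
    (if hj : (j : ℕ) < M then g ⟨i, hi⟩ ⟨j, hj⟩ else 0)
  else (if (i : ℕ) = (j : ℕ) then 1 else 0)

/-- The matrix `L_{(λ,θ)} ∈ GL_{M+1}(F)`: diagonal entries `t^{λ_i+θ_i}` for `i < M`,
and last row `(t^{θ_1}, …, t^{θ_M}, t^{θ_{M+1}})`. -/
noncomputable def Lmat (M : ℕ) (lam : Fin M → ℤ) (th : Fin (M + 1) → ℤ) :
    Matrix (Fin (M + 1)) (Fin (M + 1)) F := fun i j =>
  if hi : (i : ℕ) < M then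
    (if i = j then tpow (lam ⟨i, hi⟩ + th i) else 0)
  else tpow (th j)

/-- valuation at least `n` -/
def VGe (n : ℤ) (f : F) : Prop := ∀ m : ℤ, m < n → f.coeff m = 0

lemma tpow_eq (k : ℤ) : tpow k = HahnSeries.single k (1 : ℂ) := by
  unfold tpow
  exact (RatFunc.single_zpow k).symm

lemma tpow_coeff (k m : ℤ) (f : F) : (tpow k * f).coeff m = f.coeff (m - k) := by
  rw [tpow_eq]
  have := HahnSeries.coeff_single_mul_add (r := (1 : ℂ)) (x := f) (a := m - k) (b := k)
  simpa using this

lemma tpow_add' (a b : ℤ) : tpow (a + b) = tpow a * tpow b := by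
  simp [tpow_eq, HahnSeries.single_mul_single]

lemma tpow_zero' : tpow 0 = 1 := by
  unfold tpow; simp

lemma VGe.tpow_mul {n : ℤ} {f : F} (hf : VGe n f) (k : ℤ) : VGe (n + k) (tpow k * f) := by
  intro m hm
  rw [tpow_coeff]
  exact hf _ (by omega)

lemma VGe.mono {n n' : ℤ} {f : F} (hf : VGe n f) (h : n' ≤ n) : VGe n' f :=
  fun m hm => hf m (by omega)

lemma VGe.sum {ι : Type*} {n : ℤ} (s : Finset ι) (f : ι → F) (h : ∀ i ∈ s, VGe n (f i)) :
    VGe n (∑ i ∈ s, f i) := by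
  intro m hm
  rw [HahnSeries.coeff_sum]
  exact Finset.sum_eq_zero fun i hi => h i hi m hm

lemma VGe.of_tpow {n k : ℤ} (h : VGe n (tpow k)) : n ≤ k := by
  by_contra hk
  have := h k (by omega)
  simp [tpow_eq] at this

lemma Oint_lift {f : F} (hf : f ∈ Oint) : ∃ p : PowerSeries ℂ, HahnSeries.ofPowerSeries ℤ ℂ p = f := by
  refine ⟨PowerSeries.mk fun n => f.coeff n, ?_⟩
  ext m
  rcases le_or_gt 0 m with h | h
  · lift m to ℕ using h
    have := HahnSeries.ofPowerSeries_apply_coeff (Γ := ℤ) (PowerSeries.mk fun n => f.coeff n) m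
    simp
  · rw [hf m h, HahnSeries.ofPowerSeries_apply]
    apply HahnSeries.embDomain_of_notMem_range
    rintro ⟨n, hn⟩
    simp at hn
    omega

lemma ofPS_zero (p : PowerSeries ℂ) :
    (HahnSeries.ofPowerSeries ℤ ℂ p).coeff 0 = PowerSeries.constantCoeff p := by
  have := HahnSeries.ofPowerSeries_apply_coeff (Γ := ℤ) p 0
  simpa using this

lemma InGLO.det_ne {M : ℕ} {g : Matrix (Fin M) (Fin M) F} (hg : InGLO g) :
    (Matrix.of fun i j => (g i j).coeff 0).det ≠ 0 := by
  obtain ⟨B, h1, h2, h3, -⟩ := hg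
  choose P hP using fun i j => Oint_lift (h1 i j)
  choose Q hQ using fun i j => Oint_lift (h2 i j)
  have e : (Matrix.of P) * (Matrix.of Q) = 1 := by
    ext1 i j
    apply HahnSeries.ofPowerSeries_injective (Γ := ℤ) (R := ℂ)
    have := congrFun (congrFun h3 i) j
    simp only [Matrix.mul_apply, Matrix.of_apply, map_sum, map_mul, hP, hQ] at this ⊢
    rw [this, Matrix.one_apply, Matrix.one_apply]
    split_ifs <;> simp
  have e2 : (Matrix.of P).map (PowerSeries.constantCoeff (R := ℂ)) *
      (Matrix.of Q).map (PowerSeries.constantCoeff (R := ℂ)) = 1 := by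
    rw [← Matrix.map_mul, e]
    exact Matrix.map_one _ (map_zero _) (map_one _)
  have e3 : (Matrix.of fun i j => (g i j).coeff 0)
      = (Matrix.of P).map (PowerSeries.constantCoeff (R := ℂ)) := by
    ext i j
    rw [Matrix.of_apply, Matrix.map_apply, Matrix.of_apply, ← ofPS_zero, hP]
  rw [e3]
  intro h0
  have := congrArg Matrix.det e2
  rw [Matrix.det_mul, h0] at this
  simp at this

lemma det_zero_block {M : ℕ} (N : Matrix (Fin M) (Fin M) ℂ) (k : Fin M)
    (h : ∀ i j, k ≤ i → j ≤ k → N i j = 0) : N.det = 0 := by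
  rw [Matrix.det_apply]
  refine Finset.sum_eq_zero fun σ _ => ?_
  have : ∃ j, j ≤ k ∧ k ≤ σ j := by
    by_contra hc
    push Not at hc
    have := Finset.card_le_card_of_injOn (s := Finset.Iic k) (t := Finset.Iio k) σ
      (fun j hj => by simpa using hc j (by simpa using hj)) σ.injective.injOn
    simp at this
  obtain ⟨j, h1, h2⟩ := this
  rw [Finset.prod_eq_zero (f := fun i => N (σ i) i) (Finset.mem_univ j) (h _ _ h2 h1), smul_zero]

section Entries

variable {M : ℕ} {lam lam' : Fin M → ℤ} {th th' : Fin (M + 1) → ℤ}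
  {g : Matrix (Fin M) (Fin M) F} {A : Matrix (Fin (M + 1)) (Fin (M + 1)) F}

lemma embTop_cc (i j : Fin M) : embTop M (M + 1) g i.castSucc j.castSucc = g i j := by
  simp [embTop]

lemma embTop_cl (i : Fin M) : embTop M (M + 1) g i.castSucc (Fin.last M) = 0 := by
  simp [embTop]

lemma embTop_lc (j : Fin M) : embTop M (M + 1) g (Fin.last M) j.castSucc = 0 := by
  simp [embTop, j.isLt.ne']

lemma embTop_ll : embTop M (M + 1) g (Fin.last M) (Fin.last M) = 1 := by
  simp [embTop]

lemma Lmat_cc (i : Fin M) (j : Fin (M + 1)) : Lmat M lam th i.castSucc j =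
    if i.castSucc = j then tpow (lam i + th i.castSucc) else 0 := by
  simp [Lmat]

lemma Lmat_l (j : Fin (M + 1)) : Lmat M lam th (Fin.last M) j = tpow (th j) := by
  simp [Lmat]

lemma embTop_inv {B : Matrix (Fin M) (Fin M) F} (h : B * g = 1) :
    embTop M (M + 1) B * embTop M (M + 1) g = 1 := by
  ext1 i j
  rw [Matrix.mul_apply, Fin.sum_univ_castSucc]
  refine Fin.lastCases ?_ (fun i => ?_) i <;> refine Fin.lastCases ?_ (fun j => ?_) j
  · simp [embTop_ll, embTop_lc]
  · simp [embTop_ll, embTop_lc, Matrix.one_apply, (Fin.castSucc_lt_last j).ne']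
  · simp [embTop_ll, embTop_cl, Matrix.one_apply, (Fin.castSucc_lt_last i).ne]
  · have := congrFun (congrFun h i) j
    rw [Matrix.mul_apply] at this
    simp [embTop_cc, embTop_cl, this, Matrix.one_apply]

lemma entry_top (h : embTop M (M + 1) g * Lmat M lam th = Lmat M lam' th' * A) (i j : Fin M) :
    g i j * tpow (lam j + th j.castSucc) =
      tpow (lam' i + th' i.castSucc) * A i.castSucc j.castSucc := by
  have := congrFun (congrFun h i.castSucc) j.castSucc
  rw [Matrix.mul_apply, Matrix.mul_apply, Fin.sum_univ_castSucc] at this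
  simpa [embTop_cc, embTop_cl, Lmat_cc] using this

lemma entry_topl (h : embTop M (M + 1) g * Lmat M lam th = Lmat M lam' th' * A) (i : Fin M) :
    tpow (lam' i + th' i.castSucc) * A i.castSucc (Fin.last M) = 0 := by
  have := congrFun (congrFun h i.castSucc) (Fin.last M)
  rw [Matrix.mul_apply, Matrix.mul_apply, Fin.sum_univ_castSucc] at this
  simpa [embTop_cc, embTop_cl, Lmat_cc, (Fin.castSucc_lt_last _).ne] using this.symm

lemma entry_last (h : embTop M (M + 1) g * Lmat M lam th = Lmat M lam' th' * A)
    (j : Fin (M + 1)) :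
    tpow (th j) = ∑ i, tpow (th' i) * A i j := by
  have := congrFun (congrFun h (Fin.last M)) j
  rw [Matrix.mul_apply, Matrix.mul_apply, Fin.sum_univ_castSucc] at this
  simpa [embTop_ll, embTop_lc, Lmat_l] using this

/-- cancel a power of `t` -/
lemma tpow_shift {a b : F} {m n : ℤ} (h : a * tpow m = tpow n * b) (k : ℤ) :
    tpow k * b = tpow (k + m - n) * a := by
  have e : tpow k * b = tpow (k - n) * (tpow n * b) := by
    rw [← mul_assoc, ← tpow_add', sub_add_cancel]
  rw [e, ← h, show k + m - n = (k - n) + m by ring, tpow_add']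
  ring

lemma mu_le (hth : Monotone th) (hth' : Monotone th') (hlam : Monotone lam)
    (hlam' : Monotone lam')
    (h : embTop M (M + 1) g * Lmat M lam th = Lmat M lam' th' * A)
    (hg : InGLO g) (hA : ∀ i j, A i j ∈ Oint) (k : Fin M) :
    lam' k + th' k.castSucc ≤ lam k + th k.castSucc := by
  by_contra hk
  refine hg.det_ne (det_zero_block _ k fun i j hi hj => ?_)
  have e := tpow_shift (entry_top h i j) (lam' i + th' i.castSucc - (lam j + th j.castSucc))
  rw [show lam' i + th' i.castSucc - (lam j + th j.castSucc) + (lam j + th j.castSucc) -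
    (lam' i + th' i.castSucc) = 0 by ring, tpow_zero', one_mul] at e
  rw [Matrix.of_apply, ← e]
  have h1 := hlam' hi
  have h2 := hlam hj
  have h3 := hth' (Fin.castSucc_le_castSucc_iff.2 hi)
  have h4 := hth (Fin.castSucc_le_castSucc_iff.2 hj)
  exact VGe.tpow_mul (n := 0) (hA _ _) _ _ (by omega)

lemma th_le (hth' : Monotone th') (hlam' : Monotone lam')
    (h : embTop M (M + 1) g * Lmat M lam th = Lmat M lam' th' * A)
    (hg : ∀ i j, g i j ∈ Oint) (hA : ∀ i j, A i j ∈ Oint)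
    (hmu : ∀ k : Fin M, lam' k + th' k.castSucc = lam k + th k.castSucc) (k : Fin (M + 1)) :
    th' k ≤ th k := by
  apply VGe.of_tpow
  rw [entry_last h k]
  refine VGe.sum _ _ fun i _ => ?_
  rcases le_or_gt k i with hki | hki
  · exact (VGe.tpow_mul (n := 0) (hA _ _) _).mono (by have := hth' hki; omega)
  · obtain ⟨i, rfl⟩ := Fin.exists_castSucc_eq.2 (hki.trans_le (Fin.le_last k)).ne
    induction k using Fin.lastCases with
    | last =>
      have := tpow_shift (a := 0) (m := 0) (n := lam' i + th' i.castSucc)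
        (b := A i.castSucc (Fin.last M)) (by rw [entry_topl h i, zero_mul]) (th' i.castSucc)
      rw [this, mul_zero]
      intro m _
      simp
    | cast k =>
      rw [tpow_shift (entry_top h i k)]
      refine (VGe.tpow_mul (n := 0) (hg _ _) _).mono ?_
      have h1 := hlam' (Fin.castSucc_lt_castSucc_iff.1 hki).le
      have h2 := hmu k
      omega

end Entries

/-- If `(λ,θ) ≠ (λ',θ')` are two dominant weights of length `(M, M+1)`,
then `L_{(λ',θ')}⁻¹ · GL_M(O) · L_{(λ,θ)} ∩ GL_{M+1}(O) = ∅`; equivalently, for every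
`g ∈ GL_M(O)` (embedded block-diagonally) and every `A ∈ GL_{M+1}(O)` one has
`g · L_{(λ,θ)} ≠ L_{(λ',θ')} · A`. -/
theorem stmt0 (M : ℕ) (lam lam' : Fin M → ℤ) (th th' : Fin (M + 1) → ℤ)
    (hlam : Monotone lam) (hth : Monotone th)
    (hlam' : Monotone lam') (hth' : Monotone th')
    (hne : (lam, th) ≠ (lam', th'))
    (g : Matrix (Fin M) (Fin M) F) (A : Matrix (Fin (M + 1)) (Fin (M + 1)) F)
    (hg : InGLO g) (hA : InGLO A) :
    embTop M (M + 1) g * Lmat M lam th ≠ Lmat M lam' th' * A := by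
  intro h
  have hA0 := hA
  have hg0 := hg
  obtain ⟨B, hgO, hBO, hgB, hBg⟩ := hg0
  obtain ⟨C, hAO, hCO, hAC, hCA⟩ := hA0
  have hB : InGLO B := ⟨g, hBO, hgO, hBg, hgB⟩
  have h' : embTop M (M + 1) B * Lmat M lam' th' = Lmat M lam th * C := by
    calc embTop M (M + 1) B * Lmat M lam' th'
        = embTop M (M + 1) B * (Lmat M lam' th' * A) * C := by
          rw [Matrix.mul_assoc, Matrix.mul_assoc, hAC, Matrix.mul_one]
      _ = Lmat M lam th * C := by
          rw [← h, ← Matrix.mul_assoc, embTop_inv hBg, Matrix.one_mul]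
  have hmu : ∀ k : Fin M, lam' k + th' k.castSucc = lam k + th k.castSucc := fun k =>
    le_antisymm (mu_le hth hth' hlam hlam' h hg hAO k) (mu_le hth' hth hlam' hlam h' hB hCO k)
  have hthe : th = th' := funext fun k =>
    le_antisymm (th_le hth hlam h' hBO hCO (fun k => (hmu k).symm) k)
      (th_le hth' hlam' h hgO hAO hmu k)
  apply hne
  subst hthe
  have : lam = lam' := funext fun k => by have := hmu k; omega
  rw [this]
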